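/- arXiv:0906.2098 — 3 statements merged into one kernel-verified Lean document; each statement's English description precedes it below -/
import Mathlib

section
/- Let G be a chain graph with chain components 𝒯 and ≺ a consistent strict total order of 𝒯, and let the strictly positive joint probability mass function p obey the multivariate regression Markov property for G. Then p satisfies the pairwise Markov property: for every pair of uncoupled nodes i, k (joined by no edge of G), if i, k lie in the same chain component T then {i} ⊥ {k} | pre(T), and if i ∈ T and k ∈ pre(T) then {i} ⊥ {k} | pre(T)∖{k}. -/
/-!
For two nodes `a, b` of the same chain component `T`, the set `{a, b}` is disconnected with
connected components `{a}` and `{b}`, so (MR2) is the claim. For `b` in the past of `T`, the set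
`{a}` is connected and `b` is not a parent of `a`, so (MR1) reads `{a} ⊥ pre(T) ∖ pa(a) | pa(a)`
with `b` on the right-hand side, and weak union moves everything except `b` into the conditioning
set. Both arguments apply to arbitrary connected sets in place of `{a}` and `{b}`.
-/

open scoped Classical BigOperators

/-- A mixed graph on a node set `V`: a set of directed edges and a symmetric
irreflexive set of undirected edges, the two edge sets being disjoint. -/
structure MixedGraph (V : Type*) where
  dir : V → V → Prop
  undir : V → V → Prop
  undir_symm : ∀ {a b}, undir a b → undir b a
  undir_irrefl : ∀ a, ¬ undir a a
  edge_disjoint : ∀ a b, dir a b → ¬ undir a b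

namespace MixedGraph

variable {V : Type*} [Fintype V] [DecidableEq V] (G : MixedGraph V)

/-- One step of a semi-directed path: an undirected edge or a directed edge
followed in the direction of traversal. -/
def step (a b : V) : Prop := G.dir a b ∨ G.undir a b

/-- No semi-directed cycle: there is no directed edge `a → b` together with a
semi-directed path from `b` back to `a`. -/
def NoSemiDirectedCycle : Prop :=
  ∀ a b : V, G.dir a b → ¬ Relation.ReflTransGen G.step b a

/-- Two nodes are in the same chain component iff they are joined by a path of
undirected edges (the equivalence relation generated by the undirected part). -/
def sameComp (a b : V) : Prop := Relation.ReflTransGen G.undir a b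

/-- The chain component of a node. -/
noncomputable def component (v : V) : Finset V :=
  Finset.univ.filter fun w => G.sameComp v w

/-- `T` is a chain component of `G`. -/
def IsComponent (T : Finset V) : Prop := ∃ v, T = G.component v

/-- The collection of chain components of `G`. -/
noncomputable def componentsF : Finset (Finset V) :=
  Finset.univ.image fun v => G.component v

/-- The parents `pa_G(A)`: nodes outside `A` with a directed edge into `A`. -/
noncomputable def paG (A : Finset V) : Finset V :=
  Finset.univ.filter fun w => w ∉ A ∧ ∃ v ∈ A, G.dir w v

/-- The (inclusive) neighbours `Nb_G(A)`: `A` together with all nodes joined to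
`A` by an undirected edge. -/
noncomputable def nbG (A : Finset V) : Finset V :=
  A ∪ Finset.univ.filter fun w => ∃ v ∈ A, G.undir v w

/-- The edge relation of the directed graph `D` of chain components:
`T₁ → T₂` iff they are distinct chain components and `G` has a directed edge
from a node of `T₁` to a node of `T₂`. -/
def dirD (T₁ T₂ : Finset V) : Prop :=
  G.IsComponent T₁ ∧ G.IsComponent T₂ ∧ T₁ ≠ T₂ ∧ ∃ v ∈ T₁, ∃ w ∈ T₂, G.dir v w

/-- `pa_D(T)`: the union of the parent components of `T` in `D`. -/
noncomputable def paD (T : Finset V) : Finset V :=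
  Finset.univ.filter fun w => G.dirD (G.component w) T

/-- `nd_D(T)`: the union of the components `T'` such that there is no directed
path from `T` to `T'` in `D`. -/
noncomputable def ndD (T : Finset V) : Finset V :=
  Finset.univ.filter fun w => ¬ Relation.ReflTransGen G.dirD T (G.component w)

/-- A set of nodes `A` is connected if the subgraph of the undirected part of
`G` induced by `A` is connected (in particular nonempty). -/
def ConnectedIn (A : Finset V) : Prop :=
  A.Nonempty ∧ ∀ a ∈ A, ∀ b ∈ A,
    Relation.ReflTransGen (fun x y => x ∈ A ∧ y ∈ A ∧ G.undir x y) a b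

/-- The connected component of `v` inside the induced subgraph on `A`. -/
noncomputable def compIn (A : Finset V) (v : V) : Finset V :=
  A.filter fun w =>
    Relation.ReflTransGen (fun x y => x ∈ A ∧ y ∈ A ∧ G.undir x y) v w

/-- The set of connected components of the induced subgraph on `A`. -/
noncomputable def connComps (A : Finset V) : Finset (Finset V) :=
  A.image fun v => G.compIn A v

/-- `ord` is a strict total order of the chain components consistent with `G`:
`ord T T'` implies that `T` is not a parent component of `T'`. -/
def ConsistentOrder (ord : Finset V → Finset V → Prop) : Prop :=
  (∀ T₁ T₂, G.IsComponent T₁ → G.IsComponent T₂ → T₁ ≠ T₂ →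
      ord T₁ T₂ ∨ ord T₂ T₁) ∧
  (∀ T, G.IsComponent T → ¬ ord T T) ∧
  (∀ T₁ T₂ T₃, G.IsComponent T₁ → G.IsComponent T₂ → G.IsComponent T₃ →
      ord T₁ T₂ → ord T₂ T₃ → ord T₁ T₃) ∧
  (∀ T₁ T₂, G.IsComponent T₁ → G.IsComponent T₂ → ord T₁ T₂ → ¬ G.dirD T₁ T₂)

/-- `pre(T)`: the union of all the chain components `T'` with `T ≺ T'`
(the predecessors, i.e. the past, of `T`). -/
noncomputable def pre (ord : Finset V → Finset V → Prop) (T : Finset V) :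
    Finset V :=
  Finset.univ.filter fun w => ord T (G.component w)

end MixedGraph

/-- A cell of the joint contingency table: variable `v` takes one of the
levels `0, …, r v - 1` (level `0` playing the role of the first level `1`). -/
abbrev Cell {V : Type*} (r : V → ℕ) := ∀ v : V, Fin (r v)

variable {V : Type*} [Fintype V] [DecidableEq V] {r : V → ℕ}

/-- The marginal probability `p_S(i_S)` (as a function of a full cell `i`,
depending on it only through the coordinates in `S`). -/
noncomputable def marginal (p : Cell r → ℝ) (S : Finset V) (i : Cell r) : ℝ :=
  ∑ j : Cell r, if ∀ v ∈ S, j v = i v then p j else 0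

/-- The conditional probability `p_{A|B}(i_A | i_B)`. -/
noncomputable def condProb (p : Cell r → ℝ) (A B : Finset V) (i : Cell r) : ℝ :=
  marginal p (A ∪ B) i / marginal p B i

/-- `p` is a strictly positive joint probability mass function. -/
def IsPosPMF (p : Cell r → ℝ) : Prop :=
  (∀ i, 0 < p i) ∧ ∑ i : Cell r, p i = 1

/-- Conditional independence `A ⊥ B | C`. -/
def CondIndep (p : Cell r → ℝ) (A B C : Finset V) : Prop :=
  ∀ i : Cell r,
    marginal p (A ∪ B ∪ C) i * marginal p C i =
      marginal p (A ∪ C) i * marginal p (B ∪ C) i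

/-- The cell agreeing with `i` on `S` and equal to the first (reference)
level outside `S`. -/
def splice (hr : ∀ v, 2 ≤ r v) (S : Finset V) (i : Cell r) : Cell r :=
  fun v => if v ∈ S then i v else ⟨0, by have := hr v; omega⟩

/-- The conditional multivariate logistic contrast
`η^{(A)}(i_A | i_B) = Σ_{s ⊆ A} (−1)^{|A∖s|} log p_{A|B}((i_s, 1_{A∖s}) | i_B)`. -/
noncomputable def mlContrast (hr : ∀ v, 2 ≤ r v) (p : Cell r → ℝ)
    (A B : Finset V) (i : Cell r) : ℝ :=
  ∑ s ∈ A.powerset,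
    (-1 : ℝ) ^ (A \ s).card * Real.log (condProb p A B (splice hr (s ∪ B) i))

/-- The multivariate regression (MR) Markov property for the chain graph `G`
with respect to the consistent ordering `ord`: for every chain component `T`
and every nonempty `A ⊆ T`, (MR1) if `A` is connected then
`A ⊥ (pre(T)∖pa_G(A)) | pa_G(A)`, and (MR2) if `A` is disconnected then its
connected components are mutually independent given `pre(T)`. -/
def MRMarkov (G : MixedGraph V) (ord : Finset V → Finset V → Prop)
    (p : Cell r → ℝ) : Prop :=
  ∀ T : Finset V, G.IsComponent T → ∀ A ⊆ T, A.Nonempty →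
    (G.ConnectedIn A →
      CondIndep p A (G.pre ord T \ G.paG A) (G.paG A)) ∧
    (¬ G.ConnectedIn A →
      ∀ i : Cell r,
        condProb p A (G.pre ord T) i =
          ∏ Aj ∈ G.connComps A, condProb p Aj (G.pre ord T) i)

/-- The block-recursive Markov property of type IV for the chain graph `G`:
(IV0) `T ⊥ (nd_D(T)∖pa_D(T)) | pa_D(T)`;
(IV1) `A ⊥ (pa_D(T)∖pa_G(A)) | pa_G(A)` for all `A ⊆ T`;
(IV2) `A ⊥ (T∖Nb_G(A)) | pa_D(T)` for all connected `A ⊆ T`. -/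
def TypeIVMarkov (G : MixedGraph V) (p : Cell r → ℝ) : Prop :=
  (∀ T : Finset V, G.IsComponent T →
      CondIndep p T (G.ndD T \ G.paD T) (G.paD T)) ∧
  (∀ T : Finset V, G.IsComponent T → ∀ A ⊆ T,
      CondIndep p A (G.paD T \ G.paG A) (G.paG A)) ∧
  (∀ T : Finset V, G.IsComponent T → ∀ A ⊆ T, G.ConnectedIn A →
      CondIndep p A (T \ G.nbG A) (G.paD T))

namespace MixedGraph

variable {V : Type*} {G : MixedGraph V} {ord : Finset V → Finset V → Prop} {A B S T : Finset V}
  {a : V}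

theorem mem_component_self [Fintype V] (G : MixedGraph V) (a : V) : a ∈ G.component a :=
  Finset.mem_filter.2 ⟨Finset.mem_univ a, Relation.ReflTransGen.refl⟩

theorem sameComp_symm {v w : V} (h : G.sameComp v w) : G.sameComp w v :=
  haveI : Std.Symm G.undir := ⟨fun _ _ => G.undir_symm⟩
  Relation.ReflTransGen.stdSymm.symm _ _ h

theorem IsComponent.component_eq [Fintype V] (hT : G.IsComponent T) (ha : a ∈ T) :
    G.component a = T := by
  obtain ⟨v, rfl⟩ := hT
  have hva : G.sameComp v a := (Finset.mem_filter.1 ha).2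
  ext w
  simp only [component, Finset.mem_filter, Finset.mem_univ, true_and]
  exact ⟨hva.trans, (sameComp_symm hva).trans⟩

theorem ConsistentOrder.disjoint_pre [Fintype V] (hord : G.ConsistentOrder ord)
    (hT : G.IsComponent T) : Disjoint T (G.pre ord T) := by
  obtain ⟨-, irrefl, -, -⟩ := hord
  refine Finset.disjoint_left.2 fun a ha hpre => irrefl T hT ?_
  simpa [hT.component_eq ha] using (Finset.mem_filter.1 hpre).2

theorem NoSemiDirectedCycle.component_ne_of_dir [Fintype V] (hG : G.NoSemiDirectedCycle) {w v : V}
    (hwv : G.dir w v) : G.component w ≠ G.component v := by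
  intro heq
  have hvw : G.sameComp v w := (Finset.mem_filter.1 (heq ▸ G.mem_component_self w)).2
  exact hG w v hwv (Relation.ReflTransGen.mono (fun _ _ => Or.inr) _ _ hvw)

theorem ConsistentOrder.paG_subset_pre [Fintype V] [DecidableEq V]
    (hord : G.ConsistentOrder ord) (hG : G.NoSemiDirectedCycle) (hT : G.IsComponent T)
    (hA : A ⊆ T) : G.paG A ⊆ G.pre ord T := by
  obtain ⟨total, -, -, consistent⟩ := hord
  intro w hw
  obtain ⟨-, -, v, hv, hwv⟩ := Finset.mem_filter.1 hw
  have hw_comp : G.IsComponent (G.component w) := ⟨w, rfl⟩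
  have hne : G.component w ≠ T := hT.component_eq (hA hv) ▸ hG.component_ne_of_dir hwv
  have hparent : G.dirD (G.component w) T :=
    ⟨hw_comp, hT, hne, w, G.mem_component_self w, v, hA hv, hwv⟩
  exact Finset.mem_filter.2 ⟨Finset.mem_univ w, (total T _ hT hw_comp hne.symm).resolve_right
    fun h => consistent _ T hw_comp hT h hparent⟩

theorem connectedIn_singleton (G : MixedGraph V) (a : V) : G.ConnectedIn {a} := by
  refine ⟨Finset.singleton_nonempty a, fun x hx y hy => ?_⟩
  rw [Finset.mem_singleton.1 hx, Finset.mem_singleton.1 hy]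

theorem ConnectedIn.compIn_eq (hA : G.ConnectedIn A) (hAS : A ⊆ S)
    (hno : ∀ x ∈ A, ∀ y ∈ S, y ∉ A → ¬ G.undir x y) (ha : a ∈ A) : G.compIn S a = A := by
  ext w
  simp only [compIn, Finset.mem_filter]
  constructor
  · rintro ⟨-, hw⟩
    induction hw with
    | refl => exact ha
    | tail _ hxy hx =>
      by_contra hy
      exact hno _ hx _ hxy.2.1 hy hxy.2.2
  · exact fun hw => ⟨hAS hw, Relation.ReflTransGen.mono
      (fun _ _ h => ⟨hAS h.1, hAS h.2.1, h.2.2⟩) _ _ (hA.2 a ha w hw)⟩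

theorem connComps_union [DecidableEq V] (hA : G.ConnectedIn A) (hB : G.ConnectedIn B)
    (hno : ∀ x ∈ A, ∀ y ∈ B, ¬ G.undir x y) : G.connComps (A ∪ B) = {A, B} := by
  have hcompA : ∀ x ∈ A, G.compIn (A ∪ B) x = A := fun x =>
    hA.compIn_eq Finset.subset_union_left (by grind)
  have hcompB : ∀ x ∈ B, G.compIn (A ∪ B) x = B := fun x =>
    hB.compIn_eq Finset.subset_union_right (by grind [G.undir_symm])
  rw [connComps, Finset.image_union, Finset.image_congr hcompA, Finset.image_congr hcompB,
    Finset.image_const hA.1, Finset.image_const hB.1]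
  rfl

theorem not_connectedIn_union [DecidableEq V] (hA : G.ConnectedIn A) (hB : B.Nonempty)
    (hAB : Disjoint A B) (hno : ∀ x ∈ A, ∀ y ∈ B, ¬ G.undir x y) : ¬ G.ConnectedIn (A ∪ B) := by
  intro hconn
  obtain ⟨a, ha⟩ := hA.1
  have hcomp_eq_A : G.compIn (A ∪ B) a = A :=
    hA.compIn_eq Finset.subset_union_left (by grind) ha
  have hcomp_eq_union : G.compIn (A ∪ B) a = A ∪ B :=
    hconn.compIn_eq subset_rfl (by grind) (Finset.mem_union_left B ha)
  have hBA : B ⊆ A := Finset.union_eq_left.1 (hcomp_eq_union.symm.trans hcomp_eq_A)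
  exact hB.ne_empty (Finset.disjoint_self_iff_empty B |>.1 (hAB.mono_left hBA))

end MixedGraph

section Marginal

variable {p : Cell r → ℝ} {S S' : Finset V} {b : V}

theorem marginal_nonneg (hp : ∀ i, 0 ≤ p i) (S : Finset V) (i : Cell r) :
    0 ≤ marginal p S i :=
  Finset.sum_nonneg fun j _ => ite_nonneg (hp j) le_rfl

theorem marginal_le_of_subset (hp : ∀ i, 0 ≤ p i) (hS : S ⊆ S') (i : Cell r) :
    marginal p S' i ≤ marginal p S i := by
  refine Finset.sum_le_sum fun j _ => ?_
  by_cases h' : ∀ v ∈ S', j v = i v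
  · rw [if_pos h', if_pos fun v hv => h' v (hS hv)]
  · rw [if_neg h']
    exact ite_nonneg (hp j) le_rfl

theorem marginal_eq_zero_of_subset (hp : ∀ i, 0 ≤ p i) (hS : S ⊆ S') {i : Cell r}
    (h : marginal p S i = 0) : marginal p S' i = 0 :=
  le_antisymm (h ▸ marginal_le_of_subset hp hS i) (marginal_nonneg hp S' i)

theorem marginal_update (p : Cell r → ℝ) (hb : b ∉ S) (i : Cell r) (x : Fin (r b)) :
    marginal p S (Function.update i b x) = marginal p S i := by
  have hagree (j : Cell r) :
      (∀ v ∈ S, j v = Function.update i b x v) ↔ ∀ v ∈ S, j v = i v :=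
    forall₂_congr fun v hv => by rw [Function.update_of_ne (ne_of_mem_of_not_mem hv hb)]
  simp only [marginal, hagree]

theorem sum_marginal_insert_update (p : Cell r → ℝ) (hb : b ∉ S) (i : Cell r) :
    ∑ x, marginal p (insert b S) (Function.update i b x) = marginal p S i := by
  have hagree (j : Cell r) (x : Fin (r b)) :
      (∀ v ∈ insert b S, j v = Function.update i b x v) ↔
        j b = x ∧ ∀ v ∈ S, j v = i v := by
    rw [Finset.forall_mem_insert, Function.update_self]
    exact and_congr_right fun _ => forall₂_congr fun v hv => by
      rw [Function.update_of_ne (ne_of_mem_of_not_mem hv hb)]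
  simp only [marginal, hagree]
  rw [Finset.sum_comm]
  simp only [ite_and, Finset.sum_ite_eq, Finset.mem_univ, if_true]

end Marginal

section CondIndep

variable {p : Cell r → ℝ} {A B C D : Finset V} {b : V}

theorem condIndep_iff_condProb_union (hp : ∀ i, 0 ≤ p i) :
    CondIndep p A B C ↔
      ∀ i, condProb p (A ∪ B) C i = condProb p A C i * condProb p B C i := by
  refine forall_congr' fun i => ?_
  -- On a conditioning cell of probability zero all marginals involved vanish.
  rcases eq_or_ne (marginal p C i) 0 with hC | hC
  · simp [condProb, hC, marginal_eq_zero_of_subset hp Finset.subset_union_right hC]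
  · unfold condProb
    field_simp

namespace CondIndep

theorem of_insert (hbA : b ∉ A) (h : CondIndep p A (insert b B) C) : CondIndep p A B C := by
  by_cases hbBC : b ∈ B ∪ C
  · have hunion : insert b B ∪ C = B ∪ C := by
      rw [Finset.insert_union, Finset.insert_eq_of_mem hbBC]
    simpa only [CondIndep, Finset.union_assoc, hunion] using h
  · obtain ⟨hbB, hbC⟩ := Finset.notMem_union.1 hbBC
    have hbAC : b ∉ A ∪ C := Finset.notMem_union.2 ⟨hbA, hbC⟩
    have hbABC : b ∉ A ∪ B ∪ C := by simp [hbA, hbB, hbC]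
    intro i
    rw [← sum_marginal_insert_update p hbABC, ← sum_marginal_insert_update p hbBC,
      Finset.sum_mul, Finset.mul_sum]
    refine Finset.sum_congr rfl fun x _ => ?_
    have hx := h (Function.update i b x)
    rwa [marginal_update p hbC, marginal_update p hbAC, Finset.union_insert,
      Finset.insert_union, Finset.insert_union] at hx

theorem of_union_left (hAB : Disjoint A B) (h : CondIndep p A (B ∪ D) C) :
    CondIndep p A D C := by
  induction B using Finset.induction_on with
  | empty => rwa [Finset.empty_union] at h
  | insert b B _ ih =>
    obtain ⟨hbA, hAB⟩ := Finset.disjoint_insert_right.1 hAB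
    exact ih hAB (of_insert hbA (by rwa [Finset.insert_union] at h))

theorem weak_union (hp : ∀ i, 0 ≤ p i) (hAB : Disjoint A B) (h : CondIndep p A (B ∪ D) C) :
    CondIndep p A B (D ∪ C) := by
  intro i
  have hBD := h i
  have hD := h.of_union_left hAB i
  simp only [Finset.union_assoc] at hBD hD ⊢
  rcases eq_or_ne (marginal p C i) 0 with hC | hC
  · have hvanish (S : Finset V) (hS : C ⊆ S) : marginal p S i = 0 :=
      marginal_eq_zero_of_subset hp hS hC
    rw [hvanish (D ∪ C) Finset.subset_union_right,
      hvanish (B ∪ (D ∪ C)) (by grind), mul_zero, mul_zero]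
  · apply mul_right_cancel₀ hC
    linear_combination marginal p (D ∪ C) i * hBD - marginal p (B ∪ (D ∪ C)) i * hD

end CondIndep

end CondIndep

namespace MRMarkov

variable {G : MixedGraph V} {ord : Finset V → Finset V → Prop} {p : Cell r → ℝ}
  {A B T : Finset V}

theorem condIndep_pre (hMR : MRMarkov G ord p) (hp : ∀ i, 0 ≤ p i) (hT : G.IsComponent T)
    (hAT : A ⊆ T) (hBT : B ⊆ T) (hA : G.ConnectedIn A) (hB : G.ConnectedIn B)
    (hAB : Disjoint A B) (hno : ∀ x ∈ A, ∀ y ∈ B, ¬ G.undir x y) :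
    CondIndep p A B (G.pre ord T) := by
  refine (condIndep_iff_condProb_union hp).2 fun i => ?_
  have hne : A ≠ B := hAB.ne hA.1.ne_empty
  have hdisconn := MixedGraph.not_connectedIn_union hA hB.1 hAB hno
  have hfactor := (hMR T hT (A ∪ B) (Finset.union_subset hAT hBT) (hA.1.inl)).2 hdisconn i
  rwa [MixedGraph.connComps_union hA hB hno, Finset.prod_pair hne] at hfactor

theorem condIndep_pre_sdiff (hMR : MRMarkov G ord p) (hp : ∀ i, 0 ≤ p i)
    (hG : G.NoSemiDirectedCycle) (hord : G.ConsistentOrder ord) (hT : G.IsComponent T)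
    (hAT : A ⊆ T) (hA : G.ConnectedIn A) (hB : B ⊆ G.pre ord T)
    (hno : ∀ x ∈ A, ∀ y ∈ B, ¬ G.dir y x) :
    CondIndep p A B (G.pre ord T \ B) := by
  have hpa : G.paG A ⊆ G.pre ord T := hord.paG_subset_pre hG hT hAT
  have hAB : Disjoint A B := (hord.disjoint_pre hT).mono hAT hB
  have hBpa : Disjoint B (G.paG A) := Finset.disjoint_left.2 fun y hyB hy => by
    obtain ⟨-, -, x, hx, hyx⟩ := Finset.mem_filter.1 hy
    exact hno x hx y hyB hyx
  have hsplit : G.pre ord T \ G.paG A = B ∪ (G.pre ord T \ B) \ G.paG A := by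
    grind [Finset.disjoint_left]
  have hcond : (G.pre ord T \ B) \ G.paG A ∪ G.paG A = G.pre ord T \ B :=
    Finset.sdiff_union_of_subset (Finset.subset_sdiff.2 ⟨hpa, hBpa.symm⟩)
  have hMR1 : CondIndep p A (G.pre ord T \ G.paG A) (G.paG A) := (hMR T hT A hAT hA.1).1 hA
  rw [hsplit] at hMR1
  simpa only [hcond] using hMR1.weak_union hp hAB

end MRMarkov

theorem mr_markov_pairwise_general (G : MixedGraph V) (hG : G.NoSemiDirectedCycle)
    (ord : Finset V → Finset V → Prop) (hord : G.ConsistentOrder ord)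
    (p : Cell r → ℝ) (hp : ∀ i, 0 ≤ p i) (hMR : MRMarkov G ord p) (a b : V)
    (hab : a ≠ b) (hdir : ¬ G.dir b a) (hundir : ¬ G.undir a b) :
    (∀ T : Finset V, G.IsComponent T → a ∈ T → b ∈ T →
      CondIndep p {a} {b} (G.pre ord T)) ∧
    (∀ T : Finset V, G.IsComponent T → a ∈ T → b ∈ G.pre ord T →
      CondIndep p {a} {b} (G.pre ord T \ {b})) := by
  have ha_conn := G.connectedIn_singleton a
  refine ⟨fun T hT ha hb => ?_, fun T hT ha hb => ?_⟩
  · exact hMR.condIndep_pre hp hT (Finset.singleton_subset_iff.2 ha)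
      (Finset.singleton_subset_iff.2 hb) ha_conn (G.connectedIn_singleton b)
      (Finset.disjoint_singleton.2 hab) (by simpa using hundir)
  · exact hMR.condIndep_pre_sdiff hp hG hord hT (Finset.singleton_subset_iff.2 ha) ha_conn
      (Finset.singleton_subset_iff.2 hb) (by simpa using hdir)

/-- Remark 1, pairwise Markov property: under the
multivariate regression Markov property, for every uncoupled pair of nodes
`a, b`: if they lie in the same chain component `T` then `{a} ⊥ {b} | pre(T)`,
and if `a ∈ T` while `b ∈ pre(T)` then `{a} ⊥ {b} | pre(T)∖{b}`. -/
theorem mr_markov_pairwise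
    {V : Type*} [Fintype V] [DecidableEq V] {r : V → ℕ} (hr : ∀ v, 2 ≤ r v)
    (G : MixedGraph V) (hG : G.NoSemiDirectedCycle)
    (ord : Finset V → Finset V → Prop) (hord : G.ConsistentOrder ord)
    (p : Cell r → ℝ) (hp : IsPosPMF p) (hMR : MRMarkov G ord p) :
    ∀ a b : V, a ≠ b →
      ¬ G.dir a b → ¬ G.dir b a → ¬ G.undir a b →
      (∀ T : Finset V, G.IsComponent T → a ∈ T → b ∈ T →
        CondIndep p {a} {b} (G.pre ord T)) ∧
      (∀ T : Finset V, G.IsComponent T → a ∈ T → b ∈ G.pre ord T →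
        CondIndep p {a} {b} (G.pre ord T \ {b})) := by
  intro a b hab _ hdir hundir
  exact mr_markov_pairwise_general G hG ord hord p (fun i => (hp.1 i).le) hMR a b hab hdir hundir
end

section
/- Let G be a chain graph with chain components 𝒯 and ≺ a consistent strict total order of 𝒯. Suppose that for every T ∈ 𝒯 the induced subgraph G_T is complete (every pair of nodes in T is joined by an undirected edge) and pa_G(A) = pa_D(T) for every nonempty A ⊆ T. Then a strictly positive joint probability mass function p obeys the multivariate regression Markov property for G if and only if A ⊥ (pre(T)∖pa_D(T)) | pa_D(T) for every nonempty A ⊆ T and every T ∈ 𝒯, and this condition holds if and only if p factorizes as p(i) = ∏_{T∈𝒯} p(i_T | i_{pa_D(T)}). -/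
open scoped Classical BigOperators

variable {V : Type*} [Fintype V] [DecidableEq V] {r : V → ℕ}

/-! The equivalence with the factorization is the chain rule in disguise. Summing a factorization
`p_{T ∪ P} = p(i_T | i_Q) F(i_P)` with `Q ⊆ P` over the coordinates in `T` leaves `p_P = F`,
because conditional probabilities sum to one; what remains is `p_{T ∪ P} = p(i_T | i_Q) p_P`, which
says `T ⊥ (P ∖ Q) | Q`. Peeling off the chain components one at a time, starting from the one with
the largest past, thus trades the factorization for one conditional independence per component. -/

section Marginal

variable {p : Cell r → ℝ} {A A' B C D S T P Q : Finset V}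

theorem marginal_eq_sum_filter (p : Cell r → ℝ) (S : Finset V) (i : Cell r) :
    marginal p S i = ∑ j with ∀ v ∈ S, j v = i v, p j :=
  (Finset.sum_filter ..).symm

theorem dependsOn_marginal (p : Cell r → ℝ) (S : Finset V) : DependsOn (marginal p S) S := by
  intro i j hij
  simp only [marginal]
  refine Finset.sum_congr rfl fun k _ => ?_
  have hk : (∀ v ∈ S, k v = i v) ↔ ∀ v ∈ S, k v = j v :=
    forall₂_congr fun v hv => by rw [hij v hv]
  simp only [hk]

theorem marginal_pos (hp : ∀ i, 0 < p i) (S : Finset V) (i : Cell r) : 0 < marginal p S i := by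
  rw [marginal_eq_sum_filter]
  exact Finset.sum_pos (fun j _ => hp j) ⟨i, by simp⟩

theorem marginal_empty (p : Cell r → ℝ) (i : Cell r) : marginal p ∅ i = ∑ j, p j := by
  simp [marginal]

theorem marginal_univ (p : Cell r → ℝ) (i : Cell r) : marginal p Finset.univ i = p i := by
  simp [marginal, ← funext_iff]

theorem sum_marginal_union (p : Cell r → ℝ) (hDS : Disjoint D S) (i : Cell r) :
    ∑ j with ∀ v ∉ D, j v = i v, marginal p (D ∪ S) j = marginal p S i := by
  have hfiber : ∀ j ∈ ({j | ∀ v ∉ D, j v = i v} : Finset (Cell r)),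
      ({k | ∀ v ∈ D ∪ S, k v = j v} : Finset (Cell r)) =
        {k ∈ ({k | ∀ v ∈ S, k v = i v} : Finset (Cell r)) | D.piecewise k i = j} := fun j hj => by
    ext k
    simp only [Finset.mem_filter, Finset.mem_univ, true_and, Finset.mem_union, funext_iff,
      Finset.piecewise] at hj ⊢
    grind [Finset.disjoint_right]
  calc ∑ j with ∀ v ∉ D, j v = i v, marginal p (D ∪ S) j
      = ∑ j with ∀ v ∉ D, j v = i v,
          ∑ k ∈ ({k | ∀ v ∈ S, k v = i v} : Finset (Cell r)) with D.piecewise k i = j, p k :=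
        Finset.sum_congr rfl fun j hj => by rw [marginal_eq_sum_filter, hfiber j hj]
    _ = ∑ k with ∀ v ∈ S, k v = i v, p k :=
        Finset.sum_fiberwise_of_maps_to (by simp +contextual) _
    _ = marginal p S i := (marginal_eq_sum_filter p S i).symm

theorem dependsOn_condProb (p : Cell r → ℝ) (A B : Finset V) :
    DependsOn (condProb p A B) ↑(A ∪ B) := by
  intro i j hij
  rw [condProb, condProb, dependsOn_marginal p (A ∪ B) hij,
    dependsOn_marginal p B fun v hv => hij v (Finset.mem_union_right A hv)]

theorem sum_condProb (hTQ : Disjoint T Q) {i : Cell r} (hQ : marginal p Q i ≠ 0) :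
    ∑ j with ∀ v ∉ T, j v = i v, condProb p T Q j = 1 := by
  have hcond : ∀ j ∈ ({j | ∀ v ∉ T, j v = i v} : Finset (Cell r)),
      condProb p T Q j = marginal p (T ∪ Q) j / marginal p Q i := fun j hj => by
    rw [condProb, dependsOn_marginal p Q fun v hv =>
      (Finset.mem_filter.1 hj).2 v (Finset.disjoint_right.1 hTQ hv)]
  rw [Finset.sum_congr rfl hcond, ← Finset.sum_div, sum_marginal_union p hTQ, div_self hQ]

theorem CondIndep.mono_left (h : CondIndep p A' B C) (hA : A ⊆ A') (hB : Disjoint A' B) :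
    CondIndep p A B C := by
  intro i
  set D := A' \ (A ∪ C)
  have hD {v} (hv : v ∈ B ∪ C) : v ∉ D := by grind [Finset.disjoint_right]
  have hABC : D ∪ (A ∪ B ∪ C) = A' ∪ B ∪ C := by grind
  have hAC : D ∪ (A ∪ C) = A' ∪ C := by grind
  rw [← sum_marginal_union p (D := D) (S := A ∪ B ∪ C) (by grind [Finset.disjoint_right]),
    ← sum_marginal_union p (D := D) (S := A ∪ C) Finset.sdiff_disjoint, hABC, hAC,
    Finset.sum_mul, Finset.sum_mul]
  refine Finset.sum_congr rfl fun j hj => ?_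
  have hji {v} (hv : v ∈ B ∪ C) : i v = j v := ((Finset.mem_filter.1 hj).2 v (hD hv)).symm
  rw [dependsOn_marginal p C fun v hv => hji (Finset.mem_union_right B hv),
    dependsOn_marginal p (B ∪ C) fun v hv => hji hv]
  exact h j

theorem condIndep_sdiff_iff (hp : ∀ i, 0 < p i) (hQP : Q ⊆ P) :
    CondIndep p T (P \ Q) Q ↔
      ∀ i, marginal p (T ∪ P) i = condProb p T Q i * marginal p P i := by
  refine forall_congr' fun i => ?_
  rw [condProb, div_mul_eq_mul_div, eq_div_iff (marginal_pos hp Q i).ne', Finset.union_assoc,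
    Finset.sdiff_union_of_subset hQP]

theorem marginal_union_eq_condProb_mul_iff (hp : ∀ i, 0 < p i) (hTP : Disjoint T P) (hQP : Q ⊆ P)
    {F : Cell r → ℝ} (hF : DependsOn F P) :
    (∀ i, marginal p (T ∪ P) i = condProb p T Q i * F i) ↔
      CondIndep p T (P \ Q) Q ∧ ∀ i, marginal p P i = F i := by
  rw [condIndep_sdiff_iff hp hQP]
  refine ⟨fun h => ?_, fun ⟨hT, hP⟩ i => by rw [hT, hP]⟩
  suffices hP : ∀ i, marginal p P i = F i from ⟨fun i => by rw [h, hP], hP⟩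
  intro i
  calc marginal p P i
      = ∑ j with ∀ v ∉ T, j v = i v, condProb p T Q j * F j := by
        simp only [← sum_marginal_union p hTP i, h]
    _ = ∑ j with ∀ v ∉ T, j v = i v, condProb p T Q j * F i :=
        Finset.sum_congr rfl fun j hj => congrArg _ <|
          hF fun v hv => (Finset.mem_filter.1 hj).2 v (Finset.disjoint_right.1 hTP hv)
    _ = F i := by
        rw [← Finset.sum_mul, sum_condProb (hTP.mono_right hQP) (marginal_pos hp Q i).ne', one_mul]

theorem marginal_biUnion_eq_prod_condProb_iff {ι : Type*} {ord : ι → ι → Prop}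
    [IsStrictTotalOrder ι ord] (hp : IsPosPMF p) {B Q : ι → Finset V} (s : Finset ι)
    (hB : (s : Set ι).PairwiseDisjoint B) (hQ : ∀ t ∈ s, Q t ⊆ {u ∈ s | ord t u}.biUnion B) :
    (∀ i, marginal p (s.biUnion B) i = ∏ t ∈ s, condProb p (B t) (Q t) i) ↔
      ∀ t ∈ s, CondIndep p (B t) ({u ∈ s | ord t u}.biUnion B \ Q t) (Q t) := by
  let _ := linearOrderOfSTO ord
  induction s using Finset.induction_on_min with
  | empty => simp [marginal_empty, hp.2]
  | insert a s ha ih =>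
    replace ha : ∀ t ∈ s, ord a t := ha
    have has : a ∉ s := fun h => irrefl a (ha a h)
    have hpast_min : {u ∈ insert a s | ord a u} = s := by
      rw [Finset.filter_insert, if_neg (irrefl a), Finset.filter_true_of_mem ha]
    have hpast : ∀ t ∈ s, {u ∈ insert a s | ord t u} = {u ∈ s | ord t u} := fun t ht => by
      rw [Finset.filter_insert, if_neg (asymm (ha t ht))]
    simp only [Finset.forall_mem_insert, hpast_min] at hQ ⊢
    obtain ⟨hQa, hQs⟩ := hQ
    rw [Finset.coe_insert, Set.pairwiseDisjoint_insert_of_notMem (by simpa using has)] at hB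
    have hdisj : Disjoint (B a) (s.biUnion B) := (Finset.disjoint_biUnion_right ..).2 hB.2
    have hprod : DependsOn (fun i => ∏ t ∈ s, condProb p (B t) (Q t) i) (s.biUnion B) := by
      refine fun i j hij => Finset.prod_congr rfl fun t ht => dependsOn_condProb p _ _ ?_
      have hsub : B t ∪ Q t ⊆ s.biUnion B :=
        Finset.union_subset (Finset.subset_biUnion_of_mem B ht) <|
          (hpast t ht ▸ hQs t ht).trans <|
            Finset.biUnion_subset_biUnion_of_subset_left B (Finset.filter_subset ..)
      exact fun v hv => hij v (hsub hv)
    simp only [Finset.prod_insert has, Finset.biUnion_insert]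
    exact (marginal_union_eq_condProb_mul_iff hp.1 hdisj hQa hprod).trans <| and_congr_right' <|
      (ih hB.1 fun t ht => hpast t ht ▸ hQs t ht).trans <|
        forall₂_congr fun t ht => by rw [hpast t ht]

end Marginal

namespace MixedGraph

theorem connectedIn_of_pairwise_undir {V : Type*} {G : MixedGraph V} {A : Finset V}
    (hA : (A : Set V).Pairwise G.undir) (hne : A.Nonempty) : G.ConnectedIn A := by
  refine ⟨hne, fun a ha b hb => ?_⟩
  rcases eq_or_ne a b with rfl | hab
  · exact .refl
  · exact .single ⟨ha, hb, hA ha hb hab⟩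

variable {V : Type*} [Fintype V] {G : MixedGraph V} {ord : Finset V → Finset V → Prop}
  {T : Finset V}

theorem isComponent_component (v : V) : G.IsComponent (G.component v) := ⟨v, rfl⟩

theorem mem_component_self_s9 (v : V) : v ∈ G.component v :=
  Finset.mem_filter.2 ⟨Finset.mem_univ v, .refl⟩

theorem IsComponent.nonempty (hT : G.IsComponent T) : T.Nonempty := by
  obtain ⟨v, rfl⟩ := hT
  exact ⟨v, mem_component_self_s9 v⟩

theorem IsComponent.mem_iff_component_eq (hT : G.IsComponent T) {v : V} :
    v ∈ T ↔ G.component v = T := by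
  refine ⟨fun hv => ?_, fun h => h ▸ mem_component_self_s9 v⟩
  obtain ⟨w, rfl⟩ := hT
  have hwv : G.sameComp w v := (Finset.mem_filter.1 hv).2
  have : Std.Symm G.undir := ⟨fun _ _ => G.undir_symm⟩
  have hvw : G.sameComp v w := Relation.ReflTransGen.stdSymm.symm _ _ hwv
  exact Finset.filter_congr fun x _ => ⟨hwv.trans, hvw.trans⟩

theorem pairwiseDisjoint_isComponent : {T | G.IsComponent T}.PairwiseDisjoint id :=
  fun _ hT _ hT' hne => Finset.disjoint_left.2 fun _ hv hv' =>
    hne ((hT.mem_iff_component_eq.1 hv).symm.trans (hT'.mem_iff_component_eq.1 hv'))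

theorem mem_pre {v : V} : v ∈ G.pre ord T ↔ ord T (G.component v) := by
  simp [pre]

namespace ConsistentOrder

theorem isStrictTotalOrder (hord : G.ConsistentOrder ord) :
    IsStrictTotalOrder {T // G.IsComponent T} (Subrel ord G.IsComponent) where
  trichotomous T T' h h' := by
    by_contra hne
    exact (hord.1 T T' T.2 T'.2 (Subtype.coe_ne_coe.2 hne)).elim h h'
  irrefl T := hord.2.1 T T.2
  trans T₁ T₂ T₃ := hord.2.2.1 T₁ T₂ T₃ T₁.2 T₂.2 T₃.2

theorem paD_subset_pre (hord : G.ConsistentOrder ord) (T : Finset V) :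
    G.paD T ⊆ G.pre ord T := fun w hw => by
  have hwT : G.dirD (G.component w) T := (Finset.mem_filter.1 hw).2
  have ⟨hw, hT, hne, _⟩ := hwT
  exact mem_pre.2 <| (hord.1 _ _ hw hT hne).resolve_left fun h => hord.2.2.2 _ _ hw hT h hwT

theorem disjoint_pre_s9 (hord : G.ConsistentOrder ord) (hT : G.IsComponent T) :
    Disjoint T (G.pre ord T) :=
  Finset.disjoint_left.2 fun v hv hv' => hord.2.1 T hT <| by
    rwa [mem_pre, hT.mem_iff_component_eq.1 hv] at hv'

end ConsistentOrder

variable [DecidableEq V] {r : V → ℕ}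

theorem mem_componentsF : T ∈ G.componentsF ↔ G.IsComponent T := by
  simp [componentsF, IsComponent, eq_comm]

theorem biUnion_components_eq_univ :
    Finset.univ.biUnion (fun T : {T // G.IsComponent T} => (T : Finset V)) = Finset.univ :=
  Finset.eq_univ_of_forall fun v => Finset.mem_biUnion.2
    ⟨⟨G.component v, isComponent_component v⟩, Finset.mem_univ _, mem_component_self_s9 v⟩

theorem biUnion_components_eq_pre (T : {T // G.IsComponent T}) :
    ({T' | Subrel ord G.IsComponent T T'} : Finset _).biUnion (↑) = G.pre ord T := by
  ext v
  simp only [Finset.mem_biUnion, Finset.mem_filter, Finset.mem_univ, true_and, mem_pre]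
  exact ⟨fun ⟨T', hT', hv⟩ => T'.2.mem_iff_component_eq.1 hv ▸ hT',
    fun h => ⟨⟨_, isComponent_component v⟩, h, mem_component_self_s9 v⟩⟩

theorem mrMarkov_iff_of_complete {p : Cell r → ℝ}
    (hcomplete : ∀ T, G.IsComponent T → (T : Set V).Pairwise G.undir)
    (hpa : ∀ T, G.IsComponent T → ∀ A ⊆ T, A.Nonempty → G.paG A = G.paD T) :
    MRMarkov G ord p ↔ ∀ T, G.IsComponent T → ∀ A ⊆ T, A.Nonempty →
      CondIndep p A (G.pre ord T \ G.paD T) (G.paD T) := by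
  refine forall₂_congr fun T hT => forall₃_congr fun A hA hne => ?_
  have hconn := connectedIn_of_pairwise_undir ((hcomplete T hT).mono hA) hne
  simp only [hconn, hpa T hT A hA hne, forall_const, not_true_eq_false, IsEmpty.forall_iff,
    and_true]

namespace ConsistentOrder

theorem forall_subset_condIndep_iff (hord : G.ConsistentOrder ord) (hT : G.IsComponent T)
    (p : Cell r → ℝ) :
    (∀ A ⊆ T, A.Nonempty → CondIndep p A (G.pre ord T \ G.paD T) (G.paD T)) ↔
      CondIndep p T (G.pre ord T \ G.paD T) (G.paD T) :=
  ⟨fun h => h T subset_rfl hT.nonempty, fun h _ hA _ =>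
    h.mono_left hA ((hord.disjoint_pre_s9 hT).mono_right Finset.sdiff_subset)⟩

theorem forall_condIndep_iff_eq_prod_condProb (hord : G.ConsistentOrder ord) {p : Cell r → ℝ}
    (hp : IsPosPMF p) :
    (∀ T, G.IsComponent T → CondIndep p T (G.pre ord T \ G.paD T) (G.paD T)) ↔
      ∀ i, p i = ∏ T ∈ G.componentsF, condProb p T (G.paD T) i := by
  have := hord.isStrictTotalOrder
  have hpre := biUnion_components_eq_pre (G := G) (ord := ord)
  have hfactor := marginal_biUnion_eq_prod_condProb_iff (ord := Subrel ord G.IsComponent) hp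
    (B := (↑)) (Q := fun T => G.paD T) Finset.univ
    (fun T _ T' _ hne => pairwiseDisjoint_isComponent T.2 T'.2 (Subtype.coe_ne_coe.2 hne))
    (fun T _ => (hord.paD_subset_pre T).trans (hpre T).ge)
  simp only [biUnion_components_eq_univ, marginal_univ, hpre, Finset.mem_univ, forall_const,
    Subtype.forall] at hfactor
  simp only [Finset.prod_subtype G.componentsF (fun _ => mem_componentsF), hfactor]

end ConsistentOrder

end MixedGraph

/-- Remark 3: if every chain component induces a complete
undirected subgraph and `pa_G(A) = pa_D(T)` for every nonempty `A ⊆ T`, then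
the multivariate regression Markov property is equivalent to
`A ⊥ (pre(T)∖pa_D(T)) | pa_D(T)` for all nonempty `A ⊆ T` and all `T`, which
in turn is equivalent to the factorization
`p(i) = ∏_T p(i_T | i_{pa_D(T)})`. -/
theorem mr_markov_complete_components
    {V : Type*} [Fintype V] [DecidableEq V] {r : V → ℕ} (hr : ∀ v, 2 ≤ r v)
    (G : MixedGraph V) (hG : G.NoSemiDirectedCycle)
    (ord : Finset V → Finset V → Prop) (hord : G.ConsistentOrder ord)
    (p : Cell r → ℝ) (hp : IsPosPMF p)
    (hcomplete : ∀ T : Finset V, G.IsComponent T →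
      ∀ a ∈ T, ∀ b ∈ T, a ≠ b → G.undir a b)
    (hpa : ∀ T : Finset V, G.IsComponent T → ∀ A ⊆ T, A.Nonempty →
      G.paG A = G.paD T) :
    (MRMarkov G ord p ↔
      ∀ T : Finset V, G.IsComponent T → ∀ A ⊆ T, A.Nonempty →
        CondIndep p A (G.pre ord T \ G.paD T) (G.paD T)) ∧
    ((∀ T : Finset V, G.IsComponent T → ∀ A ⊆ T, A.Nonempty →
        CondIndep p A (G.pre ord T \ G.paD T) (G.paD T)) ↔
      ∀ i : Cell r, p i = ∏ T ∈ G.componentsF, condProb p T (G.paD T) i) :=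
  ⟨MixedGraph.mrMarkov_iff_of_complete
      (fun T hT a ha b hb => hcomplete T hT a ha b hb) hpa,
    (forall₂_congr fun _ hT => hord.forall_subset_condIndep_iff hT p).trans
      (hord.forall_condIndep_iff_eq_prod_condProb hp)⟩
end

section
/- Let V be a finite set carrying a mixed graph with a set of directed edges and a symmetric irreflexive set of undirected edges, and suppose the graph has no semi-directed cycle. Define a relation on the connected components of the undirected part of the graph by T1 → T2 if and only if T1 ≠ T2 and there is a directed edge from a node of T1 to a node of T2. Then this relation on components has no directed cycle; i.e., the directed graph D of chain components is a directed acyclic graph. -/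
open scoped Classical BigOperators

variable {V : Type*} [Fintype V] [DecidableEq V] {r : V → ℕ}

/-! A cycle of components lifts to a semi-directed cycle of nodes: two consecutive directed edges
meet in a component, inside which the head of the first is joined to the tail of the second by
undirected edges. -/

namespace MixedGraph

section Reachability

variable {V ι : Type*} {G : MixedGraph V} {a b : V}

theorem equivalence_sameComp (G : MixedGraph V) : Equivalence G.sameComp where
  refl _ := .refl
  symm h :=
    have : Std.Symm G.undir := ⟨fun _ _ => G.undir_symm⟩
    Relation.ReflTransGen.stdSymm.symm _ _ h
  trans := .trans

theorem reflTransGen_step_of_sameComp (h : G.sameComp a b) : Relation.ReflTransGen G.step a b :=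
  Relation.ReflTransGen.mono (fun _ _ => Or.inr) _ _ h

theorem reflTransGen_step_of_reflTransGen_map {f : V → ι}
    (hf : ∀ a b, f a = f b → Relation.ReflTransGen G.step a b)
    (h : Relation.ReflTransGen (Relation.Map G.dir f f) (f a) (f b)) :
    Relation.ReflTransGen G.step a b := by
  generalize hd : f b = d at h
  induction h generalizing b with
  | refl => exact hf a b hd.symm
  | tail _ hedge ih =>
    obtain ⟨v, w, hvw, hv, hw⟩ := hedge
    have hwb : Relation.ReflTransGen G.step w b := hf w b (hw.trans hd.symm)
    exact ((ih hv).tail (Or.inl hvw)).trans hwb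

end Reachability

section Components

variable {V : Type*} [Fintype V] {G : MixedGraph V} {v w : V} {S T : Finset V}

theorem mem_component : w ∈ G.component v ↔ G.sameComp v w :=
  Finset.mem_filter_univ w

theorem component_eq_component_iff : G.component v = G.component w ↔ G.sameComp v w := by
  have hequiv := G.equivalence_sameComp
  refine ⟨fun h => ?_, fun h => ?_⟩
  · exact mem_component.mp (h ▸ mem_component.mpr (hequiv.refl w))
  · ext u
    simp only [mem_component]
    exact ⟨hequiv.trans (hequiv.symm h), hequiv.trans h⟩

theorem IsComponent.component_eq_of_mem (hT : G.IsComponent T) (hv : v ∈ T) :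
    G.component v = T := by
  obtain ⟨u, rfl⟩ := hT
  exact (component_eq_component_iff.mpr (mem_component.mp hv)).symm

theorem map_dir_component_of_dirD (h : G.dirD S T) :
    Relation.Map G.dir G.component G.component S T := by
  obtain ⟨hS, hT, -, v, hv, w, hw, hvw⟩ := h
  exact ⟨v, w, hvw, hS.component_eq_of_mem hv, hT.component_eq_of_mem hw⟩

end Components

end MixedGraph

/- `f` stands for the map sending a node to its component: `G.component` when `V` is finite, the
quotient map by `G.sameComp` for arbitrary `V`. -/
theorem componentGraph_acyclic_general {V ι : Type*} (G : MixedGraph V)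
    (hG : G.NoSemiDirectedCycle) {f : V → ι}
    (hf : ∀ a b, f a = f b → Relation.ReflTransGen G.step a b) (c : ι) :
    ¬ Relation.TransGen (Relation.Map G.dir f f) c c := by
  intro hcycle
  obtain ⟨_, ⟨a, b, hab, rfl, rfl⟩, hback⟩ := Relation.TransGen.head'_iff.mp hcycle
  exact hG a b hab (MixedGraph.reflTransGen_step_of_reflTransGen_map hf hback)

/-- for a mixed graph with no semi-directed cycle, the
induced directed graph `D` on the chain components has no directed cycle,
i.e. `D` is a directed acyclic graph. -/
theorem componentGraph_acyclic
    {V : Type*} [Fintype V] [DecidableEq V]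
    (G : MixedGraph V) (hG : G.NoSemiDirectedCycle) :
    ∀ T : Finset V, ¬ Relation.TransGen G.dirD T T := by
  intro T hT
  refine componentGraph_acyclic_general G hG (fun v w (h : G.component v = G.component w) => ?_) T
    (Relation.TransGen.mono (fun _ _ => MixedGraph.map_dir_component_of_dirD) _ _ hT)
  exact MixedGraph.reflTransGen_step_of_sameComp (MixedGraph.component_eq_component_iff.mp h)
end
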